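/- Let ρ ∈ (0, 1), k = ρ/√(1 − ρ²), and let W₁, W₂ be independent standard normal random variables with Z₁ = W₁ and Z₂ = ρW₁ + √(1 − ρ²)·W₂. Then for every t > 0, with F(w) = e^{−w²/2}·Φ(kw): (i) P(Z₁ ≥ t and Z₂ ≥ ρt) = φ(t) · ∫₀^∞ e^{−tw} F(w) dw, and (ii) E[ Z₁ · 1{Z₁ ≥ t and Z₂ ≥ ρt} ] = φ(t) · ∫₀^∞ e^{−tw} (t + w) F(w) dw. -/

import Mathlib

open MeasureTheory ProbabilityTheory

/-- The standard normal density `φ(s) = exp(−s²/2)/√(2π)`. -/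
noncomputable def stdNormalPDF (s : ℝ) : ℝ := Real.exp (-s ^ 2 / 2) / Real.sqrt (2 * Real.pi)

/-- The standard normal CDF `Φ(s) = ∫_{−∞}^s φ`. -/
noncomputable def stdNormalCDF (s : ℝ) : ℝ := ∫ x in Set.Iic s, stdNormalPDF x

/-!
Given `X = x ≥ t`, the event `a t ≤ a X + b Y` with `b > 0` reads `Y ≥ -(a/b)(x - t)`, which by the
symmetry of the Gaussian has probability `Φ((a/b)(x - t))`. Integrating over `x` and substituting
`x = t + w`, the factorization `φ(t + w) = φ(t) e^{-tw} e^{-w²/2}` yields a Laplace transform.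
-/

section Fubini

variable {α β E : Type*} [MeasurableSpace α] [MeasurableSpace β]
  [NormedAddCommGroup E] [NormedSpace ℝ E] {μ : Measure α} {ν : Measure β} [IsFiniteMeasure ν]
  {s : Set α} {A : Set (α × β)} {g : α → E}

lemma setIntegral_prod_comp_fst [SFinite μ] (hA : MeasurableSet A) (hg : IntegrableOn g s μ) :
    ∫ p in s ×ˢ Set.univ ∩ A, g p.1 ∂μ.prod ν = ∫ x in s, ν.real (Prod.mk x ⁻¹' A) • g x ∂μ := by
  by_cases hE : CompleteSpace E; swap
  · simp only [integral, hE, dite_false]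
  have integral_section (x : α) :
      ∫ y, A.indicator (fun p ↦ g p.1) (x, y) ∂ν = ν.real (Prod.mk x ⁻¹' A) • g x :=
    integral_indicator_const (g x) (measurable_prodMk_left hA)
  calc ∫ p in s ×ˢ Set.univ ∩ A, g p.1 ∂μ.prod ν
    _ = ∫ p, A.indicator (fun p ↦ g p.1) p ∂(μ.restrict s).prod ν := by
      rw [integral_indicator hA, ← Measure.restrict_univ (μ := ν), Measure.prod_restrict,
        Measure.restrict_univ, Measure.restrict_restrict hA, Set.inter_comm]
    _ = ∫ x in s, ∫ y, A.indicator (fun p ↦ g p.1) (x, y) ∂ν ∂μ :=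
      integral_prod _ ((hg.comp_fst ν).indicator hA)
    _ = ∫ x in s, ν.real (Prod.mk x ⁻¹' A) • g x ∂μ := by simp_rw [integral_section]

lemma setIntegral_comp_of_indepFun {Ω : Type*} [MeasurableSpace Ω] {P : Measure Ω}
    {X : Ω → α} {Y : Ω → β} (hX : HasLaw X μ P) (hY : HasLaw Y ν P)
    (hXY : IndepFun X Y P) (hs : MeasurableSet s) (hA : MeasurableSet A) (hg : Integrable g μ) :
    ∫ ω in {ω | X ω ∈ s ∧ (X ω, Y ω) ∈ A}, g (X ω) ∂P =
      ∫ x in s, ν.real (Prod.mk x ⁻¹' A) • g x ∂μ := by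
  have : IsFiniteMeasure P := hY.isFiniteMeasure
  have : IsFiniteMeasure μ := hX.isFiniteMeasure_iff.1 inferInstance
  have law_pair : P.map (fun ω ↦ (X ω, Y ω)) = μ.prod ν := by
    rw [(indepFun_iff_map_prod_eq_prod_map_map hX.aemeasurable hY.aemeasurable).1 hXY,
      hX.map_eq, hY.map_eq]
  rw [← setIntegral_prod_comp_fst hA hg.integrableOn, ← law_pair,
    setIntegral_map ((hs.prod .univ).inter hA) (law_pair ▸ hg.aestronglyMeasurable.comp_fst)
      (hX.aemeasurable.prodMk hY.aemeasurable)]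
  simp only [Set.preimage, Set.mem_inter_iff, Set.mem_prod, Set.mem_univ, and_true]

end Fubini

section StandardNormal

lemma gaussianPDFReal_zero_one : gaussianPDFReal 0 1 = stdNormalPDF := by
  ext x
  simp [gaussianPDFReal, stdNormalPDF, div_eq_inv_mul]

lemma stdNormalPDF_add (t w : ℝ) :
    stdNormalPDF (t + w) = stdNormalPDF t * (Real.exp (-t * w) * Real.exp (-w ^ 2 / 2)) := by
  rw [stdNormalPDF, stdNormalPDF, div_mul_eq_mul_div, ← Real.exp_add, ← Real.exp_add]
  ring_nf

lemma gaussianReal_real_Iic_eq_stdNormalCDF (x : ℝ) :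
    (gaussianReal 0 1).real (Set.Iic x) = stdNormalCDF x := by
  rw [measureReal_def, gaussianReal_apply_eq_integral 0 one_ne_zero, gaussianPDFReal_zero_one,
    ENNReal.toReal_ofReal (integral_nonneg fun y ↦ by unfold stdNormalPDF; positivity),
    stdNormalCDF]

lemma gaussianReal_real_Ici_neg_eq_stdNormalCDF (x : ℝ) :
    (gaussianReal 0 1).real (Set.Ici (-x)) = stdNormalCDF x := by
  have map_neg : (gaussianReal 0 1).map (fun y ↦ -y) = gaussianReal 0 1 := by
    simpa using gaussianReal_map_neg (μ := 0) (v := 1)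
  rw [← gaussianReal_real_Iic_eq_stdNormalCDF, ← map_neg,
    map_measureReal_apply measurable_neg measurableSet_Ici, map_neg]
  simp

lemma gaussianReal_real_setOf_le_add_mul (a x c : ℝ) {b : ℝ} (hb : 0 < b) :
    (gaussianReal 0 1).real {y | c ≤ a * x + b * y} = stdNormalCDF ((a * x - c) / b) := by
  rw [← gaussianReal_real_Ici_neg_eq_stdNormalCDF]
  congr with y
  rw [← neg_div, div_le_iff₀ hb]
  constructor <;> intro h <;> linarith

variable {E : Type*} [NormedAddCommGroup E] [NormedSpace ℝ E]

lemma setIntegral_Ici_gaussianReal (f : ℝ → E) (t : ℝ) :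
    ∫ x in Set.Ici t, f x ∂gaussianReal 0 1 =
      stdNormalPDF t •
        ∫ w in Set.Ioi 0, (Real.exp (-t * w) * Real.exp (-w ^ 2 / 2)) • f (t + w) := by
  calc ∫ x in Set.Ici t, f x ∂gaussianReal 0 1
    _ = ∫ x in Set.Ici t, stdNormalPDF x • f x := by
      rw [← integral_indicator measurableSet_Ici,
        integral_gaussianReal_eq_integral_smul one_ne_zero, gaussianPDFReal_zero_one]
      simp_rw [← Set.indicator_smul_apply]
      rw [integral_indicator measurableSet_Ici]
    _ = ∫ w in Set.Ioi 0, stdNormalPDF (t + w) • f (t + w) := by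
      rw [← (measurePreserving_add_left volume t).setIntegral_preimage_emb
        (measurableEmbedding_addLeft t), Set.preimage_const_add_Ici, sub_self,
        integral_Ici_eq_integral_Ioi]
    _ = stdNormalPDF t •
        ∫ w in Set.Ioi 0, (Real.exp (-t * w) * Real.exp (-w ^ 2 / 2)) • f (t + w) := by
      simp_rw [stdNormalPDF_add, mul_smul _ (_ * _ : ℝ), integral_smul]

variable {Ω : Type*} [MeasurableSpace Ω] {P : Measure Ω} {X Y : Ω → ℝ}

lemma setIntegral_comp_bivariate_gaussian_tail (hX : HasLaw X (gaussianReal 0 1) P)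
    (hY : HasLaw Y (gaussianReal 0 1) P) (hXY : IndepFun X Y P) (a : ℝ) {b : ℝ} (hb : 0 < b)
    (t : ℝ) {g : ℝ → E} (hg : Integrable g (gaussianReal 0 1)) :
    ∫ ω in {ω | t ≤ X ω ∧ a * t ≤ a * X ω + b * Y ω}, g (X ω) ∂P =
      stdNormalPDF t • ∫ w in Set.Ioi 0,
        (Real.exp (-t * w) * (Real.exp (-w ^ 2 / 2) * stdNormalCDF (a / b * w))) • g (t + w) := by
  have measurableSet_halfPlane : MeasurableSet {p : ℝ × ℝ | a * t ≤ a * p.1 + b * p.2} :=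
    measurableSet_le (by fun_prop) (by fun_prop)
  calc ∫ ω in {ω | t ≤ X ω ∧ a * t ≤ a * X ω + b * Y ω}, g (X ω) ∂P
    _ = ∫ x in Set.Ici t, (gaussianReal 0 1).real {y | a * t ≤ a * x + b * y} • g x
          ∂gaussianReal 0 1 :=
      setIntegral_comp_of_indepFun hX hY hXY measurableSet_Ici measurableSet_halfPlane hg
    _ = ∫ x in Set.Ici t, stdNormalCDF (a / b * (x - t)) • g x ∂gaussianReal 0 1 := by
      simp_rw [gaussianReal_real_setOf_le_add_mul _ _ _ hb, ← mul_sub, mul_div_right_comm]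
    _ = stdNormalPDF t • ∫ w in Set.Ioi 0,
        (Real.exp (-t * w) * (Real.exp (-w ^ 2 / 2) * stdNormalCDF (a / b * w))) • g (t + w) := by
      simp_rw [setIntegral_Ici_gaussianReal, smul_smul, mul_assoc, add_sub_cancel_left]

theorem stmt11_general (hX : HasLaw X (gaussianReal 0 1) P) (hY : HasLaw Y (gaussianReal 0 1) P)
    (hXY : IndepFun X Y P) (a : ℝ) {b : ℝ} (hb : 0 < b) (t : ℝ) :
    P.real {ω | t ≤ X ω ∧ a * t ≤ a * X ω + b * Y ω} =
      stdNormalPDF t *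
        ∫ w in Set.Ioi 0,
          Real.exp (-t * w) * (Real.exp (-w ^ 2 / 2) * stdNormalCDF (a / b * w)) ∧
    ∫ ω in {ω | t ≤ X ω ∧ a * t ≤ a * X ω + b * Y ω}, X ω ∂P =
      stdNormalPDF t *
        ∫ w in Set.Ioi 0,
          Real.exp (-t * w) * (t + w) * (Real.exp (-w ^ 2 / 2) * stdNormalCDF (a / b * w)) := by
  have integrable_id : Integrable (fun x ↦ x) (gaussianReal 0 1) :=
    (memLp_id_gaussianReal 1).integrable le_rfl
  constructor
  · simpa using setIntegral_comp_bivariate_gaussian_tail hX hY hXY a hb t (integrable_const (1 : ℝ))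
  · simpa only [smul_eq_mul, mul_right_comm] using
      setIntegral_comp_bivariate_gaussian_tail hX hY hXY a hb t integrable_id

end StandardNormal

/-- Laplace-transform representation of bivariate normal tails: for `Z₁ = W₁`,
`Z₂ = ρW₁ + √(1−ρ²)W₂` with `W₁, W₂` independent standard normals, `k = ρ/√(1−ρ²)` and
`F(w) = e^{−w²/2} Φ(kw)`, one has for every `t > 0`:
(i) `P(Z₁ ≥ t, Z₂ ≥ ρt) = φ(t) ∫₀^∞ e^{−tw} F(w) dw`, and
(ii) `E[Z₁ 1{Z₁ ≥ t, Z₂ ≥ ρt}] = φ(t) ∫₀^∞ e^{−tw} (t + w) F(w) dw`. -/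
theorem stmt11 {Ω : Type*} [MeasurableSpace Ω] (μ : Measure Ω) [IsProbabilityMeasure μ]
    (ρ : ℝ) (hρ0 : 0 < ρ) (hρ1 : ρ < 1)
    (W₁ W₂ : Ω → ℝ) (hW₁ : Measurable W₁) (hW₂ : Measurable W₂)
    (hlaw₁ : μ.map W₁ = gaussianReal 0 1) (hlaw₂ : μ.map W₂ = gaussianReal 0 1)
    (hindep : IndepFun W₁ W₂ μ)
    (t : ℝ) (ht : 0 < t) :
    (μ {ω | t ≤ W₁ ω ∧ ρ * t ≤ ρ * W₁ ω + Real.sqrt (1 - ρ ^ 2) * W₂ ω}).toReal =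
      stdNormalPDF t *
        ∫ w in Set.Ioi (0 : ℝ), Real.exp (-t * w) *
          (Real.exp (-w ^ 2 / 2) * stdNormalCDF (ρ / Real.sqrt (1 - ρ ^ 2) * w)) ∧
    (∫ ω in {ω | t ≤ W₁ ω ∧ ρ * t ≤ ρ * W₁ ω + Real.sqrt (1 - ρ ^ 2) * W₂ ω}, W₁ ω ∂μ) =
      stdNormalPDF t *
        ∫ w in Set.Ioi (0 : ℝ), Real.exp (-t * w) * (t + w) *
          (Real.exp (-w ^ 2 / 2) * stdNormalCDF (ρ / Real.sqrt (1 - ρ ^ 2) * w)) := by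
  exact stmt11_general ⟨hW₁.aemeasurable, hlaw₁⟩ ⟨hW₂.aemeasurable, hlaw₂⟩ hindep ρ
    (Real.sqrt_pos.2 (by nlinarith)) t
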